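/- Let A and B be subspaces of a finite-dimensional Hilbert space H with orthonormal bases given as the columns of matrices V_A and V_B, and set R_A = 2V_A V_A† − I, R_B = 2V_B V_B† − I. Then on A + B, the unitary R_A R_B has eigenvalue 1 with multiplicity 1 (assuming V_A† V_B has singular value 1 with multiplicity 1), and every other eigenvalue of R_A R_B on A + B is either −1 or of the form e^{±2iθ} with θ = arccos(λ) ∈ (0, π/2) for a singular value λ ∈ (0,1) of V_A† V_B. -/

import Mathlib

open scoped BigOperators
open Matrix

/-!
Let `x = V_Bᴴ v` and `y = V_Aᴴ v` for an eigenvector `v` of `R_A R_B` with eigenvalue `μ`, and let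
`M = V_Aᴴ V_B`. Since `V_Aᴴ R_A = V_Aᴴ` and `V_Bᴴ R_B = V_Bᴴ`, projecting the eigenvalue equation
gives `(1 + μ) y = 2 M x` and `(1 + μ) x = 2 μ Mᴴ y`, so `(1 + μ)² x = 4 μ Mᴴ M x`. As `R_A R_B` is
unitary, `μ = e^{±2iθ}`, and the last equation says that `cos² θ` is an eigenvalue of `Mᴴ M`.
Inside `A + B` the fixed vectors of `R_A R_B` are exactly those of `A ∩ B`, which `V_B` identifies
with the eigenspace of `Mᴴ M` at `1`.
-/

section Reflection

variable {R ι m n : Type*} [CommRing R] [StarRing R] [Fintype ι] [DecidableEq ι]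
  [Fintype m] [Fintype n] {μ : R} {v : ι → R}

/-- The matrix `2 V Vᴴ - 1`. When the columns of `V` are orthonormal, it is the reflection that
fixes the column space of `V` and negates its orthogonal complement. -/
def columnReflection (V : Matrix ι m R) : Matrix ι ι R :=
  (2 : R) • (V * Vᴴ) - 1

lemma columnReflection_mulVec (V : Matrix ι m R) (v : ι → R) :
    columnReflection V *ᵥ v = (2 : R) • (V *ᵥ (Vᴴ *ᵥ v)) - v := by
  rw [columnReflection, sub_mulVec, smul_mulVec, one_mulVec, mulVec_mulVec]

lemma columnReflection_mem_unitary [DecidableEq m] {V : Matrix ι m R} (hV : Vᴴ * V = 1) :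
    columnReflection V ∈ unitary (Matrix ι ι R) := by
  have hproj : IsStarProjection (V * Vᴴ) :=
    { isIdempotentElem := by
        rw [IsIdempotentElem, Matrix.mul_assoc, ← Matrix.mul_assoc Vᴴ, hV, Matrix.one_mul]
      isSelfAdjoint := isHermitian_mul_conjTranspose_self V }
  simpa only [columnReflection, two_smul, two_mul] using hproj.two_mul_sub_one_mem_unitary

lemma conjTranspose_mulVec_columnReflection_mulVec [DecidableEq m] {V : Matrix ι m R}
    (hV : Vᴴ * V = 1) (v : ι → R) : Vᴴ *ᵥ (columnReflection V *ᵥ v) = Vᴴ *ᵥ v := by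
  rw [columnReflection_mulVec, mulVec_sub, mulVec_smul, mulVec_mulVec _ Vᴴ V, hV, one_mulVec]
  module

lemma columnReflection_mulVec_columnReflection_mulVec [DecidableEq m] {V : Matrix ι m R}
    (hV : Vᴴ * V = 1) (v : ι → R) : columnReflection V *ᵥ (columnReflection V *ᵥ v) = v := by
  rw [columnReflection_mulVec, conjTranspose_mulVec_columnReflection_mulVec hV,
    columnReflection_mulVec, sub_sub_cancel]

lemma columnReflection_mulVec_of_mem_range [DecidableEq m] {V : Matrix ι m R} (hV : Vᴴ * V = 1)
    (hv : v ∈ LinearMap.range V.mulVecLin) : columnReflection V *ᵥ v = v := by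
  obtain ⟨a, rfl⟩ := hv
  rw [mulVecLin_apply, columnReflection_mulVec, mulVec_mulVec _ Vᴴ V, hV, one_mulVec]
  module

variable {A : Matrix ι m R} {B : Matrix ι n R}

lemma columnReflection_mulVec_eq_smul_columnReflection_mulVec [DecidableEq m] (hA : Aᴴ * A = 1)
    (h : (columnReflection A * columnReflection B) *ᵥ v = μ • v) :
    columnReflection B *ᵥ v = μ • columnReflection A *ᵥ v := by
  rw [← mulVec_smul, ← h, ← mulVec_mulVec, columnReflection_mulVec_columnReflection_mulVec hA]

lemma one_add_smul_conjTranspose_left_mulVec [DecidableEq m] (hA : Aᴴ * A = 1)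
    (h : (columnReflection A * columnReflection B) *ᵥ v = μ • v) :
    (1 + μ) • Aᴴ *ᵥ v = (2 : R) • (Aᴴ * B) *ᵥ (Bᴴ *ᵥ v) := by
  have hcoord : Aᴴ *ᵥ (columnReflection B *ᵥ v) = μ • Aᴴ *ᵥ v := by
    rw [← mulVec_smul, ← h, ← mulVec_mulVec, conjTranspose_mulVec_columnReflection_mulVec hA]
  rw [columnReflection_mulVec, mulVec_sub, mulVec_smul] at hcoord
  rw [← mulVec_mulVec]
  linear_combination (norm := module) -hcoord

lemma one_add_smul_conjTranspose_right_mulVec [DecidableEq m] [DecidableEq n]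
    (hA : Aᴴ * A = 1) (hB : Bᴴ * B = 1)
    (h : (columnReflection A * columnReflection B) *ᵥ v = μ • v) :
    (1 + μ) • Bᴴ *ᵥ v = (2 * μ) • (Aᴴ * B)ᴴ *ᵥ (Aᴴ *ᵥ v) := by
  have hcoord : Bᴴ *ᵥ v = μ • Bᴴ *ᵥ (columnReflection A *ᵥ v) := by
    rw [← mulVec_smul, ← columnReflection_mulVec_eq_smul_columnReflection_mulVec hA h,
      conjTranspose_mulVec_columnReflection_mulVec hB]
  rw [columnReflection_mulVec, mulVec_sub, mulVec_smul] at hcoord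
  rw [conjTranspose_mul, conjTranspose_conjTranspose, ← mulVec_mulVec]
  linear_combination (norm := module) hcoord

lemma one_add_sq_smul_conjTranspose_mulVec [DecidableEq m] [DecidableEq n]
    (hA : Aᴴ * A = 1) (hB : Bᴴ * B = 1)
    (h : (columnReflection A * columnReflection B) *ᵥ v = μ • v) :
    (1 + μ) ^ 2 • Bᴴ *ᵥ v = (4 * μ) • ((Aᴴ * B)ᴴ * (Aᴴ * B)) *ᵥ (Bᴴ *ᵥ v) :=
  calc (1 + μ) ^ 2 • Bᴴ *ᵥ v
    _ = (2 * μ) • (Aᴴ * B)ᴴ *ᵥ ((1 + μ) • Aᴴ *ᵥ v) := by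
        rw [pow_two, mul_smul, one_add_smul_conjTranspose_right_mulVec hA hB h, smul_comm,
          mulVec_smul]
    _ = (4 * μ) • ((Aᴴ * B)ᴴ * (Aᴴ * B)) *ᵥ (Bᴴ *ᵥ v) := by
        rw [one_add_smul_conjTranspose_left_mulVec hA h, mulVec_smul, mulVec_mulVec]
        module

end Reflection

section Spectrum

variable {K ι : Type*} [Fintype ι] [DecidableEq ι]

lemma mem_spectrum_of_mulVec_eq_smul [Field K] {M : Matrix ι ι K} {μ : K} {v : ι → K}
    (hv : v ≠ 0) (h : M *ᵥ v = μ • v) : μ ∈ spectrum K M := by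
  rw [← spectrum_toLin']
  exact (Module.End.hasEigenvalue_of_hasEigenvector
    ⟨Module.End.mem_eigenspace_iff.2 h, hv⟩).mem_spectrum

open scoped Matrix.Norms.L2Operator in
lemma norm_eq_one_of_mem_unitary_of_mulVec_eq_smul {U : Matrix ι ι ℂ}
    (hU : U ∈ unitary (Matrix ι ι ℂ)) {μ : ℂ} {v : ι → ℂ} (hv : v ≠ 0) (h : U *ᵥ v = μ • v) :
    ‖μ‖ = 1 :=
  spectrum.norm_eq_one_of_unitary hU (mem_spectrum_of_mulVec_eq_smul hv h)

end Spectrum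

section ColumnSpaces

variable {𝕜 ι m n : Type*} [RCLike 𝕜] [Fintype ι] [Fintype m] [Fintype n]
  {A : Matrix ι m 𝕜} {B : Matrix ι n 𝕜} {v : ι → 𝕜}

open scoped ComplexOrder in
lemma eq_zero_of_mem_range_sup_range
    (hv : v ∈ LinearMap.range A.mulVecLin ⊔ LinearMap.range B.mulVecLin)
    (hA : Aᴴ *ᵥ v = 0) (hB : Bᴴ *ᵥ v = 0) : v = 0 := by
  obtain ⟨_, ⟨a, rfl⟩, _, ⟨b, rfl⟩, hab⟩ := Submodule.mem_sup.1 hv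
  simp only [mulVecLin_apply] at hab
  have hself : star v ⬝ᵥ v = star a ⬝ᵥ (Aᴴ *ᵥ v) + star b ⬝ᵥ (Bᴴ *ᵥ v) := by
    nth_rewrite 1 [← hab]
    rw [star_add, add_dotProduct, star_mulVec, star_mulVec, ← dotProduct_mulVec,
      ← dotProduct_mulVec]
  rw [← dotProduct_star_self_eq_zero, hself, hA, hB, dotProduct_zero, dotProduct_zero, add_zero]

lemma conjTranspose_right_mulVec_ne_zero [DecidableEq ι] [DecidableEq m] (hA : Aᴴ * A = 1)
    (hv : v ∈ LinearMap.range A.mulVecLin ⊔ LinearMap.range B.mulVecLin) (hv₀ : v ≠ 0)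
    {μ : 𝕜} (hμ : μ ≠ -1) (h : (columnReflection A * columnReflection B) *ᵥ v = μ • v) :
    Bᴴ *ᵥ v ≠ 0 := by
  intro hB
  have hleft := one_add_smul_conjTranspose_left_mulVec hA h
  rw [hB, mulVec_zero, smul_zero, smul_eq_zero] at hleft
  have hμ' : 1 + μ ≠ 0 := fun h₀ => hμ (eq_neg_of_add_eq_zero_right h₀)
  exact hv₀ (eq_zero_of_mem_range_sup_range hv (hleft.resolve_left hμ') hB)

lemma mem_spectrum_gram_of_columnReflection_mul_eigenvector [DecidableEq ι] [DecidableEq m]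
    [DecidableEq n] (hA : Aᴴ * A = 1) (hB : Bᴴ * B = 1)
    (hv : v ∈ LinearMap.range A.mulVecLin ⊔ LinearMap.range B.mulVecLin) (hv₀ : v ≠ 0)
    {μ c : 𝕜} (hμ : μ ≠ -1) (h : (columnReflection A * columnReflection B) *ᵥ v = μ • v)
    (hc : (1 + μ) ^ 2 = 4 * μ * c) : c ∈ spectrum 𝕜 ((Aᴴ * B)ᴴ * (Aᴴ * B)) := by
  have hμ₀ : 4 * μ ≠ 0 := by
    intro h₀
    rw [h₀, zero_mul, sq_eq_zero_iff] at hc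
    exact hμ (eq_neg_of_add_eq_zero_right hc)
  refine mem_spectrum_of_mulVec_eq_smul (conjTranspose_right_mulVec_ne_zero hA hv hv₀ hμ h) ?_
  apply smul_right_injective _ hμ₀
  simp only [← one_add_sq_smul_conjTranspose_mulVec hA hB h, hc, smul_smul]

lemma eigenspace_columnReflection_mul_one_inf_sup_range [DecidableEq ι] [DecidableEq m]
    [DecidableEq n] (hA : Aᴴ * A = 1) (hB : Bᴴ * B = 1) :
    Module.End.eigenspace (columnReflection A * columnReflection B).mulVecLin 1 ⊓
        (LinearMap.range A.mulVecLin ⊔ LinearMap.range B.mulVecLin) =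
      LinearMap.range A.mulVecLin ⊓ LinearMap.range B.mulVecLin := by
  ext v
  simp only [Submodule.mem_inf, Module.End.mem_eigenspace_iff, mulVecLin_apply]
  constructor
  · rintro ⟨hfix, hv⟩
    have hproj : A *ᵥ (Aᴴ *ᵥ v) = B *ᵥ (Bᴴ *ᵥ v) := by
      have h := columnReflection_mulVec_eq_smul_columnReflection_mulVec hA hfix
      rw [one_smul, columnReflection_mulVec, columnReflection_mulVec, sub_left_inj] at h
      exact (smul_right_injective _ two_ne_zero h).symm
    have hvB : v - B *ᵥ (Bᴴ *ᵥ v) = 0 := by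
      apply eq_zero_of_mem_range_sup_range
        (sub_mem hv (Submodule.mem_sup_right ⟨Bᴴ *ᵥ v, rfl⟩))
      · rw [mulVecLin_apply, ← hproj, mulVec_sub, mulVec_mulVec _ Aᴴ A, hA, one_mulVec, sub_self]
      · rw [mulVecLin_apply, mulVec_sub, mulVec_mulVec _ Bᴴ B, hB, one_mulVec, sub_self]
    rw [sub_eq_zero] at hvB
    exact ⟨⟨Aᴴ *ᵥ v, hproj.trans hvB.symm⟩, ⟨Bᴴ *ᵥ v, hvB.symm⟩⟩
  · rintro ⟨hvA, hvB⟩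
    refine ⟨?_, Submodule.mem_sup_left hvA⟩
    rw [← mulVec_mulVec, columnReflection_mulVec_of_mem_range hB hvB,
      columnReflection_mulVec_of_mem_range hA hvA, one_smul]

open scoped ComplexOrder in
lemma mulVec_conjTranspose_mulVec_eq_of_gram_mulVec_eq [DecidableEq m] [DecidableEq n]
    (hA : Aᴴ * A = 1) (hB : Bᴴ * B = 1) {x : n → 𝕜}
    (hx : ((Aᴴ * B)ᴴ * (Aᴴ * B)) *ᵥ x = x) : A *ᵥ (Aᴴ *ᵥ (B *ᵥ x)) = B *ᵥ x := by
  -- The defect `D = B - A Aᴴ B` satisfies `Dᴴ D = 1 - Mᴴ M` with `M = Aᴴ B`.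
  have hgram : (B - A * (Aᴴ * B))ᴴ * (B - A * (Aᴴ * B)) = 1 - (Aᴴ * B)ᴴ * (Aᴴ * B) := by
    have hA' : Aᴴ * (A * (Aᴴ * B)) = Aᴴ * B := by rw [← Matrix.mul_assoc, hA, Matrix.one_mul]
    simp only [conjTranspose_sub, conjTranspose_mul, conjTranspose_conjTranspose, Matrix.sub_mul,
      Matrix.mul_sub, Matrix.mul_assoc, hB, hA', sub_self, sub_zero]
  have hker : (B - A * (Aᴴ * B)) *ᵥ x = 0 := by
    rw [← conjTranspose_mul_self_mulVec_eq_zero, hgram, sub_mulVec, one_mulVec, hx, sub_self]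
  rw [sub_mulVec, sub_eq_zero] at hker
  simpa only [mulVec_mulVec, Matrix.mul_assoc] using hker.symm

lemma map_eigenspace_gram_one [DecidableEq m] [DecidableEq n]
    (hA : Aᴴ * A = 1) (hB : Bᴴ * B = 1) :
    (Module.End.eigenspace ((Aᴴ * B)ᴴ * (Aᴴ * B)).mulVecLin 1).map B.mulVecLin =
      LinearMap.range A.mulVecLin ⊓ LinearMap.range B.mulVecLin := by
  ext v
  simp only [Submodule.mem_map, Submodule.mem_inf, Module.End.mem_eigenspace_iff, mulVecLin_apply,
    one_smul]
  constructor
  · rintro ⟨x, hx, rfl⟩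
    exact ⟨⟨_, mulVec_conjTranspose_mulVec_eq_of_gram_mulVec_eq hA hB hx⟩, ⟨x, rfl⟩⟩
  · rintro ⟨⟨y, hy⟩, ⟨x, rfl⟩⟩
    simp only [mulVecLin_apply] at hy ⊢
    refine ⟨x, ?_, rfl⟩
    calc ((Aᴴ * B)ᴴ * (Aᴴ * B)) *ᵥ x
      _ = Bᴴ *ᵥ (A *ᵥ ((Aᴴ * A) *ᵥ y)) := by
          simp only [← mulVec_mulVec, conjTranspose_mul, conjTranspose_conjTranspose, hy]
      _ = x := by rw [hA, one_mulVec, hy, mulVec_mulVec, hB, one_mulVec]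

lemma finrank_eigenspace_columnReflection_mul_one_inf_sup_range [DecidableEq ι] [DecidableEq m]
    [DecidableEq n] (hA : Aᴴ * A = 1) (hB : Bᴴ * B = 1) :
    Module.finrank 𝕜
        (Module.End.eigenspace (columnReflection A * columnReflection B).mulVecLin 1 ⊓
          (LinearMap.range A.mulVecLin ⊔ LinearMap.range B.mulVecLin) : Submodule 𝕜 (ι → 𝕜)) =
      Module.finrank 𝕜 (Module.End.eigenspace ((Aᴴ * B)ᴴ * (Aᴴ * B)).mulVecLin 1) := by
  rw [eigenspace_columnReflection_mul_one_inf_sup_range hA hB, ← map_eigenspace_gram_one hA hB]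
  have hleft : Function.LeftInverse Bᴴ.mulVecLin B.mulVecLin := fun x => by
    rw [mulVecLin_apply, mulVecLin_apply, mulVec_mulVec, hB, one_mulVec]
  exact (Submodule.equivMapOfInjective B.mulVecLin hleft.injective _).finrank_eq.symm

end ColumnSpaces

section UnitCircle

lemma one_add_exp_sq (z : ℂ) :
    (1 + Complex.exp (2 * z * Complex.I)) ^ 2 =
      4 * Complex.exp (2 * z * Complex.I) * Complex.cos z ^ 2 := by
  have hdouble : Complex.exp (2 * z * Complex.I) = Complex.exp (z * Complex.I) ^ 2 := by
    rw [← Complex.exp_nat_mul, Nat.cast_ofNat, mul_assoc]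
  have hinv : Complex.exp (z * Complex.I) * Complex.exp (-z * Complex.I) = 1 := by
    rw [← Complex.exp_add, neg_mul, add_neg_cancel, Complex.exp_zero]
  have hsum : 1 + Complex.exp (2 * z * Complex.I) =
      2 * Complex.exp (z * Complex.I) * Complex.cos z := by
    rw [Complex.cos, hdouble]
    linear_combination -hinv
  rw [hsum, hdouble]
  ring

lemma cos_mem_Ioo_zero_one {θ : ℝ} (hθ : θ ∈ Set.Ioo 0 (Real.pi / 2)) :
    Real.cos θ ∈ Set.Ioo 0 1 := by
  refine ⟨Real.cos_pos_of_mem_Ioo ⟨by linarith [hθ.1, Real.pi_pos], hθ.2⟩, ?_⟩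
  simpa only [Real.cos_zero] using
    Real.cos_lt_cos_of_nonneg_of_le_pi_div_two le_rfl hθ.2.le hθ.1

lemma exists_half_angle_of_norm_eq_one {μ : ℂ} (hμ : ‖μ‖ = 1) (hne_one : μ ≠ 1)
    (hne_neg_one : μ ≠ -1) :
    ∃ θ ∈ Set.Ioo 0 (Real.pi / 2),
      μ = Complex.exp (2 * θ * Complex.I) ∨ μ = Complex.exp (-(2 * θ) * Complex.I) := by
  obtain ⟨α, ⟨hα_gt, hα_le⟩, rfl⟩ := Complex.norm_eq_one_iff'.1 hμ
  have hα₀ : α ≠ 0 := by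
    rintro rfl
    exact hne_one (by rw [Complex.ofReal_zero, zero_mul, Complex.exp_zero])
  have hα_lt : α < Real.pi := by
    refine lt_of_le_of_ne hα_le ?_
    rintro rfl
    exact hne_neg_one Complex.exp_pi_mul_I
  rcases lt_or_gt_of_ne hα₀ with hα | hα
  · refine ⟨-α / 2, ⟨by linarith, by linarith⟩, Or.inr ?_⟩
    push_cast
    ring_nf
  · refine ⟨α / 2, ⟨by linarith, by linarith⟩, Or.inl ?_⟩
    push_cast
    ring_nf

lemma one_add_sq_eq_of_eq_exp {μ θ : ℂ}
    (h : μ = Complex.exp (2 * θ * Complex.I) ∨ μ = Complex.exp (-(2 * θ) * Complex.I)) :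
    (1 + μ) ^ 2 = 4 * μ * Complex.cos θ ^ 2 := by
  rcases h with rfl | rfl
  · exact one_add_exp_sq θ
  · simpa only [mul_neg, Complex.cos_neg] using one_add_exp_sq (-θ)

end UnitCircle

theorem szegedy_spectral_theorem_general {ι m n : Type*} [Fintype ι] [DecidableEq ι]
    [Fintype m] [DecidableEq m] [Fintype n] [DecidableEq n]
    (VA : Matrix ι m ℂ) (VB : Matrix ι n ℂ) (hVA : VAᴴ * VA = 1) (hVB : VBᴴ * VB = 1)
    (RA RB : Matrix ι ι ℂ)
    (hRA : RA = (2 : ℂ) • (VA * VAᴴ) - 1) (hRB : RB = (2 : ℂ) • (VB * VBᴴ) - 1) :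
    Module.finrank ℂ
        (Module.End.eigenspace (RA * RB).mulVecLin 1 ⊓
          (LinearMap.range VA.mulVecLin ⊔ LinearMap.range VB.mulVecLin) : Submodule ℂ (ι → ℂ)) =
      Module.finrank ℂ (Module.End.eigenspace ((VAᴴ * VB)ᴴ * (VAᴴ * VB)).mulVecLin 1) ∧
    ∀ (μ : ℂ) (v : ι → ℂ),
      v ∈ LinearMap.range VA.mulVecLin ⊔ LinearMap.range VB.mulVecLin → v ≠ 0 →
      (RA * RB) *ᵥ v = μ • v →
      μ = 1 ∨ μ = -1 ∨
        ∃ lam θ : ℝ, lam ∈ Set.Ioo (0 : ℝ) 1 ∧ θ ∈ Set.Ioo 0 (Real.pi / 2) ∧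
          Real.cos θ = lam ∧
          (lam : ℂ) ^ 2 ∈ spectrum ℂ ((VAᴴ * VB)ᴴ * (VAᴴ * VB)) ∧
          (μ = Complex.exp (2 * θ * Complex.I) ∨ μ = Complex.exp (-(2 * θ) * Complex.I)) := by
  obtain rfl : RA = columnReflection VA := hRA
  obtain rfl : RB = columnReflection VB := hRB
  refine ⟨finrank_eigenspace_columnReflection_mul_one_inf_sup_range hVA hVB,
    fun μ v hv hv₀ h => ?_⟩
  refine or_iff_not_imp_left.2 fun hne_one => or_iff_not_imp_left.2 fun hne_neg_one => ?_
  have hunitary := mul_mem (columnReflection_mem_unitary hVA) (columnReflection_mem_unitary hVB)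
  have hnorm : ‖μ‖ = 1 := norm_eq_one_of_mem_unitary_of_mulVec_eq_smul hunitary hv₀ h
  obtain ⟨θ, hθ, hexp⟩ := exists_half_angle_of_norm_eq_one hnorm hne_one hne_neg_one
  have hspec : Complex.cos θ ^ 2 ∈ spectrum ℂ ((VAᴴ * VB)ᴴ * (VAᴴ * VB)) :=
    mem_spectrum_gram_of_columnReflection_mul_eigenvector hVA hVB hv hv₀ hne_neg_one h
      (one_add_sq_eq_of_eq_exp hexp)
  exact ⟨Real.cos θ, θ, cos_mem_Ioo_zero_one hθ, hθ, rfl, by rwa [Complex.ofReal_cos], hexp⟩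

/-- Szegedy's spectral theorem: on the sum of the subspaces `A` and `B`
(spanned by the orthonormal columns of `V_A` and `V_B`), the product of the
reflections `R_A R_B` has eigenvalue `1` with multiplicity one (given that the
singular value `1` of `V_Aᴴ V_B` has multiplicity one), and every other
eigenvalue on `A + B` is `-1` or of the form `e^{±2iθ}` with
`θ = arccos λ ∈ (0, π/2)` for a singular value `λ ∈ (0,1)` of `V_Aᴴ V_B`. -/
theorem szegedy_spectral_theorem
    {N m n : ℕ}
    (VA : Matrix (Fin N) (Fin m) ℂ) (VB : Matrix (Fin N) (Fin n) ℂ)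
    (hVA : VAᴴ * VA = 1) (hVB : VBᴴ * VB = 1)
    (RA RB : Matrix (Fin N) (Fin N) ℂ)
    (hRA : RA = (2 : ℂ) • (VA * VAᴴ) - 1)
    (hRB : RB = (2 : ℂ) • (VB * VBᴴ) - 1)
    (hmult : Module.finrank ℂ
        (Module.End.eigenspace (Matrix.mulVecLin ((VAᴴ * VB)ᴴ * (VAᴴ * VB))) 1) = 1) :
    Module.finrank ℂ
        ((Module.End.eigenspace (Matrix.mulVecLin (RA * RB)) 1) ⊓
          (LinearMap.range VA.mulVecLin ⊔ LinearMap.range VB.mulVecLin) :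
            Submodule ℂ (Fin N → ℂ)) = 1 ∧
    (∀ (μ : ℂ) (v : Fin N → ℂ),
      v ∈ (LinearMap.range VA.mulVecLin ⊔ LinearMap.range VB.mulVecLin) → v ≠ 0 →
      (RA * RB).mulVec v = μ • v →
      μ = 1 ∨ μ = -1 ∨
        ∃ lam θ : ℝ, lam ∈ Set.Ioo (0 : ℝ) 1 ∧ θ ∈ Set.Ioo 0 (Real.pi / 2) ∧
          Real.cos θ = lam ∧
          ((lam : ℂ) ^ 2) ∈ spectrum ℂ ((VAᴴ * VB)ᴴ * (VAᴴ * VB)) ∧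
          (μ = Complex.exp (2 * θ * Complex.I) ∨
            μ = Complex.exp (-(2 * θ) * Complex.I))) :=
  (szegedy_spectral_theorem_general VA VB hVA hVB RA RB hRA hRB).imp_left (·.trans hmult)
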